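/- The subgroup of F_n generated by τ_1,...,τ_{n-1} is isomorphic to the symmetric group S_n, via τ_i ↦ (i, i+1). -/

import Mathlib

/-!
The relations among the `τ_i` are the Coxeter relations of type `A_{n-1}`, so everything rests on
the fact that these present `S_n`. If `s_0, …, s_{m-1}` satisfy them in some group, then right
multiplication by any `s_i` permutes the cosets `H s_0 ⋯ s_{k-1}`, `0 ≤ k ≤ m`, of
`H = ⟨s_1, …, s_{m-1}⟩`; inductively `⟨s_0, …, s_{m-1}⟩` has at most `(m + 1)!` elements, and the
surjection of the Coxeter group onto `S_{m+1}` is bijective by counting. Hence `(i, i+1) ↦ τ_i`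
defines a homomorphism `S_n → F_n`, and the retraction `F_n → S_n` killing all `ζ_i` inverts it
on its image, the subgroup generated by the `τ_i`.
-/

set_option maxHeartbeats 1000000

namespace OneTermBracket

/-- Letters (generators) of free braid words on `n` strands:
`zeta i` is a classical crossing, `tau i` a virtual crossing, `1 ≤ i+1 ≤ n-1`. -/
inductive Letter (n : ℕ) where
  | zeta (i : Fin (n-1))
  | tau  (i : Fin (n-1))
deriving DecidableEq

namespace Letter

def idx {n : ℕ} : Letter n → Fin (n-1)
  | zeta i => i
  | tau i => i

def isZeta {n : ℕ} : Letter n → Bool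
  | zeta _ => true
  | tau _ => false

end Letter

def lo {n : ℕ} (i : Fin (n-1)) : Fin n := ⟨i.1, by have := i.2; omega⟩
def hi {n : ℕ} (i : Fin (n-1)) : Fin n := ⟨i.1 + 1, by have := i.2; omega⟩

/-- The transposition `(i, i+1)` of `{1, …, n}`. -/
def sPerm {n : ℕ} (i : Fin (n-1)) : Equiv.Perm (Fin n) := Equiv.swap (lo i) (hi i)

/-- Each letter acts on positions as the transposition `(i, i+1)`. -/
def transOf {n : ℕ} (g : Letter n) : Equiv.Perm (Fin n) := sPerm g.idx

/-- The permutation realized by the prefix of length `j` of a braid word,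
mapping the top label of a strand to its position at level `j`. -/
def prefPerm {n : ℕ} (w : List (Letter n)) (j : ℕ) : Equiv.Perm (Fin n) :=
  (((w.take j).map transOf).reverse).prod

/-- The permutation `P(β)` of a braid word (top endpoint `k` goes to bottom endpoint `P k`). -/
def permOf {n : ℕ} (w : List (Letter n)) : Equiv.Perm (Fin n) :=
  ((w.map transOf).reverse).prod

/-- The unordered pair of (top labels of the) strands crossing at position `j` of `w`. -/
def strandsAt {n : ℕ} (w : List (Letter n)) (j : ℕ) : Option (Sym2 (Fin n)) :=
  (w[j]?).map fun g => s((prefPerm w j)⁻¹ (lo g.idx), (prefPerm w j)⁻¹ (hi g.idx))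

/-- Component-wise parity determined by a partition `{1,…,n} = N₁ ⊔ N₂` (encoded by
`c : Fin n → Bool`): a classical crossing is odd (`1`) iff its two strands lie in
different parts. Non-classical positions get `0`. -/
def cwParity {n : ℕ} (c : Fin n → Bool) (w : List (Letter n)) (j : ℕ) : ZMod 2 :=
  match w[j]? with
  | some (.zeta i) =>
      if c ((prefPerm w j)⁻¹ (lo i)) = c ((prefPerm w j)⁻¹ (hi i)) then 0 else 1
  | _ => 0

/-- The defining relations of `F_n` and `FB_n` which do not involve
`ζ_i² = 1` or the classical third Reidemeister move ("strong" moves). -/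
inductive RelStrong (n : ℕ) : List (Letter n) → List (Letter n) → Prop
  | tt (i : Fin (n-1)) : RelStrong n [.tau i, .tau i] []
  | virt (i : Fin (n-1)) : RelStrong n [.zeta i, .tau i] [.tau i, .zeta i]
  | far_zz (i j : Fin (n-1)) (h : 2 ≤ Nat.dist i j) :
      RelStrong n [.zeta i, .zeta j] [.zeta j, .zeta i]
  | far_zt (i j : Fin (n-1)) (h : 2 ≤ Nat.dist i j) :
      RelStrong n [.zeta i, .tau j] [.tau j, .zeta i]
  | far_tt (i j : Fin (n-1)) (h : 2 ≤ Nat.dist i j) :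
      RelStrong n [.tau i, .tau j] [.tau j, .tau i]
  | r3v (i j : Fin (n-1)) (h : (j:ℕ) = (i:ℕ) + 1) :
      RelStrong n [.tau i, .tau j, .tau i] [.tau j, .tau i, .tau j]
  | semi (i j : Fin (n-1)) (h : (j:ℕ) = (i:ℕ) + 1) :
      RelStrong n [.tau i, .tau j, .zeta i] [.zeta j, .tau i, .tau j]

/-- The defining relations of `F_n`. -/
inductive RelF (n : ℕ) : List (Letter n) → List (Letter n) → Prop
  | strong {r1 r2} : RelStrong n r1 r2 → RelF n r1 r2
  | zz (i : Fin (n-1)) : RelF n [.zeta i, .zeta i] []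

/-- The defining relations of the free braid group `FB_n`. -/
inductive RelFB (n : ℕ) : List (Letter n) → List (Letter n) → Prop
  | ofF {r1 r2} : RelF n r1 r2 → RelFB n r1 r2
  | r3c (i j : Fin (n-1)) (h : (j:ℕ) = (i:ℕ) + 1) :
      RelFB n [.zeta i, .zeta j, .zeta i] [.zeta j, .zeta i, .zeta j]

/-- One application of a relation from `R` inside a word. -/
def StepOf {n : ℕ} (R : List (Letter n) → List (Letter n) → Prop)
    (w1 w2 : List (Letter n)) : Prop :=
  ∃ A B r1 r2, R r1 r2 ∧ w1 = A ++ r1 ++ B ∧ w2 = A ++ r2 ++ B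

/-- Strong equivalence: all moves of `F_n` except `ζ_i² = 1`. -/
def StrongEq {n : ℕ} (w1 w2 : List (Letter n)) : Prop :=
  Relation.EqvGen (StepOf (RelStrong n)) w1 w2

/-- Equivalence of braid words as elements of `F_n`. -/
def EqF {n : ℕ} (w1 w2 : List (Letter n)) : Prop :=
  Relation.EqvGen (StepOf (RelF n)) w1 w2

/-- Equivalence of braid words as elements of the free braid group `FB_n`. -/
def EqFB {n : ℕ} (w1 w2 : List (Letter n)) : Prop :=
  Relation.EqvGen (StepOf (RelFB n)) w1 w2

/-- The parity axioms, for a parity `P` defined on the class `C` of braid words.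
`P w j` is the parity of the crossing at position `j` of `w` (only classical
positions matter). -/
structure IsParity {n : ℕ} (C : List (Letter n) → Prop)
    (P : List (Letter n) → ℕ → ZMod 2) : Prop where
  /-- Crossings not taking part in a relation keep their parity (part before). -/
  untouched_left : ∀ A B r1 r2, RelFB n r1 r2 →
    C (A ++ r1 ++ B) → C (A ++ r2 ++ B) → ∀ j < A.length,
    P (A ++ r1 ++ B) j = P (A ++ r2 ++ B) j
  /-- Crossings not taking part in a relation keep their parity (part after). -/
  untouched_right : ∀ A B r1 r2, RelFB n r1 r2 →
    C (A ++ r1 ++ B) → C (A ++ r2 ++ B) → ∀ j < B.length,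
    P (A ++ r1 ++ B) (A.length + r1.length + j) = P (A ++ r2 ++ B) (A.length + r2.length + j)
  /-- In commutation-type relations (far commutativity, virtualization), the two
  letters keep their parities. -/
  comm : ∀ A B x y, RelFB n [x, y] [y, x] →
    C (A ++ [x, y] ++ B) → C (A ++ [y, x] ++ B) →
    P (A ++ [x, y] ++ B) A.length = P (A ++ [y, x] ++ B) (A.length + 1) ∧
    P (A ++ [x, y] ++ B) (A.length + 1) = P (A ++ [y, x] ++ B) A.length
  /-- In a classical second Reidemeister move both crossings have the same parity. -/
  r2c : ∀ A B (i : Fin (n-1)),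
    C (A ++ [.zeta i, .zeta i] ++ B) → C (A ++ B) →
    P (A ++ [.zeta i, .zeta i] ++ B) A.length
      = P (A ++ [.zeta i, .zeta i] ++ B) (A.length + 1)
  /-- In a semivirtual move, the classical crossing keeps its parity. -/
  semiv : ∀ A B (i j : Fin (n-1)), (j:ℕ) = (i:ℕ) + 1 →
    C (A ++ [.tau i, .tau j, .zeta i] ++ B) →
    C (A ++ [.zeta j, .tau i, .tau j] ++ B) →
    P (A ++ [.tau i, .tau j, .zeta i] ++ B) (A.length + 2)
      = P (A ++ [.zeta j, .tau i, .tau j] ++ B) A.length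
  /-- In a classical third Reidemeister move the number of odd crossings is even. -/
  r3_even : ∀ A B (i j : Fin (n-1)), (j:ℕ) = (i:ℕ) + 1 →
    C (A ++ [.zeta i, .zeta j, .zeta i] ++ B) →
    C (A ++ [.zeta j, .zeta i, .zeta j] ++ B) →
    P (A ++ [.zeta i, .zeta j, .zeta i] ++ B) A.length
      + P (A ++ [.zeta i, .zeta j, .zeta i] ++ B) (A.length + 1)
      + P (A ++ [.zeta i, .zeta j, .zeta i] ++ B) (A.length + 2) = 0
  /-- In a classical third Reidemeister move, upper/middle/lower crossings on the
  left correspond to lower/middle/upper crossings on the right with equal parities. -/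
  r3_corr : ∀ A B (i j : Fin (n-1)), (j:ℕ) = (i:ℕ) + 1 →
    C (A ++ [.zeta i, .zeta j, .zeta i] ++ B) →
    C (A ++ [.zeta j, .zeta i, .zeta j] ++ B) →
    P (A ++ [.zeta i, .zeta j, .zeta i] ++ B) A.length
      = P (A ++ [.zeta j, .zeta i, .zeta j] ++ B) (A.length + 2) ∧
    P (A ++ [.zeta i, .zeta j, .zeta i] ++ B) (A.length + 1)
      = P (A ++ [.zeta j, .zeta i, .zeta j] ++ B) (A.length + 1) ∧
    P (A ++ [.zeta i, .zeta j, .zeta i] ++ B) (A.length + 2)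
      = P (A ++ [.zeta j, .zeta i, .zeta j] ++ B) A.length

/-- Delete from `w` all classical letters whose parity (given by `par`) is even. -/
def deleteEven {n : ℕ} (w : List (Letter n)) (par : ℕ → ZMod 2) : List (Letter n) :=
  (List.range w.length).filterMap fun j =>
    (w[j]?).bind fun g =>
      match g with
      | .zeta i => if par j = 0 then none else some (.zeta i)
      | .tau i => some (.tau i)

/-- The one-term parity bracket: delete all even classical crossings. -/
def bracket {n : ℕ} (P : List (Letter n) → ℕ → ZMod 2) (w : List (Letter n)) :
    List (Letter n) :=
  deleteEven w (P w)

/-- Positions of classical crossings of a word. -/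
def ZetaPos {n : ℕ} (w : List (Letter n)) : Set ℕ :=
  {j | ∃ i, w[j]? = some (Letter.zeta i)}

/-- The classical crossings at positions `j1 < j2` form a bigon: they lie on the same
pair of strands, and no classical crossing between them lies on either of those strands. -/
def IsBigon {n : ℕ} (w : List (Letter n)) (j1 j2 : ℕ) : Prop :=
  j1 < j2 ∧ j1 ∈ ZetaPos w ∧ j2 ∈ ZetaPos w ∧
  strandsAt w j1 = strandsAt w j2 ∧
  ∀ k, j1 < k → k < j2 → k ∈ ZetaPos w →
    ∀ e e', strandsAt w j1 = some e → strandsAt w k = some e' → ∀ a ∈ e, a ∉ e'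

/-- Delete the letters at two given positions. -/
def delete2 {n : ℕ} (w : List (Letter n)) (j1 j2 : ℕ) : List (Letter n) :=
  (w.eraseIdx (max j1 j2)).eraseIdx (min j1 j2)

/-- One bigon reduction. -/
def BigonStep {n : ℕ} (w w' : List (Letter n)) : Prop :=
  ∃ j1 j2, IsBigon w j1 j2 ∧ w' = delete2 w j1 j2

/-- A word is irreducible if it admits no bigon reduction. -/
def Irreducible {n : ℕ} (w : List (Letter n)) : Prop := ¬ ∃ j1 j2, IsBigon w j1 j2

/-- Number of classical letters of a word. -/
def countZeta {n : ℕ} (w : List (Letter n)) : ℕ := (w.filter Letter.isZeta).length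

/-- `φ` is an isomorphism of the decorated graphs `Γ(w1) ≅ Γ(w2)`, encoded
combinatorially: a bijection of classical crossings preserving the pair of strands
through each crossing, the order of crossings along each strand, and the endpoint
structure (the permutation). -/
structure IsGammaIso {n : ℕ} (w1 w2 : List (Letter n)) (φ : ℕ → ℕ) : Prop where
  maps : ∀ j ∈ ZetaPos w1, φ j ∈ ZetaPos w2
  inj : ∀ j ∈ ZetaPos w1, ∀ j' ∈ ZetaPos w1, φ j = φ j' → j = j'
  surj : ∀ k ∈ ZetaPos w2, ∃ j ∈ ZetaPos w1, φ j = k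
  strands : ∀ j ∈ ZetaPos w1, strandsAt w2 (φ j) = strandsAt w1 j
  order : ∀ j ∈ ZetaPos w1, ∀ j' ∈ ZetaPos w1, j < j' →
    (∃ e e' a, strandsAt w1 j = some e ∧ strandsAt w1 j' = some e' ∧ a ∈ e ∧ a ∈ e') →
    φ j < φ j'
  perm : permOf w1 = permOf w2

/-! ### The groups `F_n` and `FB_n` as presented groups -/

/-- Generators: `Sum.inl i` is the classical generator `ζ_i`,
`Sum.inr i` is the virtual generator `τ_i`. -/
abbrev GGen (n : ℕ) := Fin (n-1) ⊕ Fin (n-1)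

def zg {n : ℕ} (i : Fin (n-1)) : FreeGroup (GGen n) := FreeGroup.of (Sum.inl i)
def tg {n : ℕ} (i : Fin (n-1)) : FreeGroup (GGen n) := FreeGroup.of (Sum.inr i)

/-- The relators of `F_n`. -/
def FRels (n : ℕ) : Set (FreeGroup (GGen n)) :=
  (⋃ i, {zg i * zg i}) ∪ (⋃ i, {tg i * tg i}) ∪
  (⋃ i, {zg i * tg i * (tg i * zg i)⁻¹}) ∪
  (⋃ (i : Fin (n-1)) (j : Fin (n-1)) (_ : 2 ≤ Nat.dist i j),
    {zg i * zg j * (zg j * zg i)⁻¹, zg i * tg j * (tg j * zg i)⁻¹,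
     tg i * tg j * (tg j * tg i)⁻¹}) ∪
  (⋃ (i : Fin (n-1)) (j : Fin (n-1)) (_ : (j:ℕ) = (i:ℕ) + 1),
    {tg i * tg j * tg i * (tg j * tg i * tg j)⁻¹,
     tg i * tg j * zg i * (zg j * tg i * tg j)⁻¹})

/-- The relators of `FB_n`: those of `F_n` together with the classical third
Reidemeister relation. -/
def FBRels (n : ℕ) : Set (FreeGroup (GGen n)) :=
  FRels n ∪
  (⋃ (i : Fin (n-1)) (j : Fin (n-1)) (_ : (j:ℕ) = (i:ℕ) + 1),
    {zg i * zg j * zg i * (zg j * zg i * zg j)⁻¹})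

/-- The group `F_n`. -/
abbrev FGrp (n : ℕ) := PresentedGroup (FRels n)

/-- The free braid group `FB_n`. -/
abbrev FBGrp (n : ℕ) := PresentedGroup (FBRels n)

def zF {n : ℕ} (i : Fin (n-1)) : FGrp n := PresentedGroup.of (Sum.inl i)
def tF {n : ℕ} (i : Fin (n-1)) : FGrp n := PresentedGroup.of (Sum.inr i)

/-- Evaluation of a braid word in `F_n`. -/
def evalF {n : ℕ} (w : List (Letter n)) : FGrp n :=
  (w.map fun g => match g with
    | Letter.zeta i => zF i
    | Letter.tau i => tF i).prod

/-- For each unordered pair of strands, the mod-2 number of classical letters of `w`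
at which these two strands cross (strand labels traced from the top). -/
def crossPar {n : ℕ} : List (Letter n) → Sym2 (Fin n) → ZMod 2
  | [], _ => 0
  | g :: rest, e =>
    (match g with
     | Letter.zeta i => if e = s(lo i, hi i) then (1 : ZMod 2) else 0
     | Letter.tau _ => 0) + crossPar rest (e.map (transOf g))

/-! ### Chord diagrams and the Gaussian parity -/

/-- The setoid on strands given by `SameCycle`; its classes are the orbits of `σ`,
i.e. the components of the closure. -/
def sameCycleSetoid {n : ℕ} (σ : Equiv.Perm (Fin n)) : Setoid (Fin n) :=
  ⟨σ.SameCycle, ⟨Equiv.Perm.SameCycle.refl σ, Equiv.Perm.SameCycle.symm,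
    Equiv.Perm.SameCycle.trans⟩⟩

/-- The rank of a strand in the single cycle of `σ` starting from strand `0`. -/
noncomputable def rankIn {n : ℕ} [NeZero n] (σ : Equiv.Perm (Fin n)) (a : Fin n) : ℕ :=
  ((Function.invFun (fun k : Fin n => (σ ^ (k : ℕ)) 0) a : Fin n) : ℕ)

/-- Coordinates on the core circle of the two endpoints of the chord of the classical
crossing at position `j` (the circle traverses the strands in the cyclic order of `σ`). -/
noncomputable def chordEnds {n : ℕ} [NeZero n] (w : List (Letter n))
    (σ : Equiv.Perm (Fin n)) (j : ℕ) : ℕ × ℕ :=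
  match w[j]? with
  | some (Letter.zeta i) =>
      (rankIn σ ((prefPerm w j)⁻¹ (lo i)) * w.length + j,
       rankIn σ ((prefPerm w j)⁻¹ (hi i)) * w.length + j)
  | _ => (0, 0)

/-- Two chords are linked iff the endpoints of one separate the endpoints of the
other on the core circle. -/
def LinkedChords {n : ℕ} [NeZero n] (w : List (Letter n)) (σ : Equiv.Perm (Fin n))
    (j k : ℕ) : Prop :=
  Xor' (min (chordEnds w σ j).1 (chordEnds w σ j).2 < (chordEnds w σ k).1 ∧
        (chordEnds w σ k).1 < max (chordEnds w σ j).1 (chordEnds w σ j).2)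
       (min (chordEnds w σ j).1 (chordEnds w σ j).2 < (chordEnds w σ k).2 ∧
        (chordEnds w σ k).2 < max (chordEnds w σ j).1 (chordEnds w σ j).2)

/-- The Gaussian parity of the classical crossing at position `j`: the mod-2 number
of chords linked with its chord. Even (`0`) iff linked with evenly many chords. -/
noncomputable def gaussParity {n : ℕ} [NeZero n] (w : List (Letter n))
    (σ : Equiv.Perm (Fin n)) (j : ℕ) : ZMod 2 :=
  (Nat.card {k : ℕ // k < w.length ∧ k ∈ ZetaPos w ∧ k ≠ j ∧ LinkedChords w σ j k} : ZMod 2)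


section TypeA

open scoped Pointwise

variable {m : ℕ} {G : Type*} [Group G]

theorem mul_pow_two_eq_one_iff_commute {a b : G} (ha : a * a = 1) (hb : b * b = 1) :
    (a * b) ^ 2 = 1 ↔ Commute a b := by
  rw [pow_two, mul_eq_one_iff_eq_inv, mul_inv_rev, inv_eq_of_mul_eq_one_left ha,
    inv_eq_of_mul_eq_one_left hb, commute_iff_eq]

theorem mul_pow_three_eq_one_iff_braid {a b : G} (ha : a * a = 1) (hb : b * b = 1) :
    (a * b) ^ 3 = 1 ↔ a * b * a = b * a * b := by
  have hinv : (b * a * b)⁻¹ = b * a * b := by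
    simp only [mul_inv_rev, inv_eq_of_mul_eq_one_left ha, inv_eq_of_mul_eq_one_left hb, mul_assoc]
  have hpow : (a * b) ^ 3 = a * b * a * (b * a * b) := by
    simp only [pow_succ, pow_zero, one_mul, mul_assoc]
  rw [hpow, mul_eq_one_iff_eq_inv, hinv]

theorem isLiftable_A_iff {s : Fin m → G} :
    (CoxeterMatrix.A m).IsLiftable s ↔
      (∀ i, s i * s i = 1) ∧
      (∀ i j : Fin m, (i : ℕ) + 1 < j → Commute (s i) (s j)) ∧
      ∀ i j : Fin m, (j : ℕ) = i + 1 → s i * s j * s i = s j * s i * s j := by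
  constructor
  · intro hs
    have hsq (i : Fin m) : s i * s i = 1 := by simpa using hs i i
    refine ⟨hsq, fun i j hij => ?_, fun i j hij => ?_⟩
    · rw [← mul_pow_two_eq_one_iff_commute (hsq i) (hsq j)]
      have hM : CoxeterMatrix.A m i j = 2 := by
        simp only [CoxeterMatrix.A, Matrix.of_apply, Fin.ext_iff]
        rw [if_neg (by omega), if_neg (by omega)]
      simpa [hM] using hs i j
    · rw [← mul_pow_three_eq_one_iff_braid (hsq i) (hsq j)]
      have hM : CoxeterMatrix.A m i j = 3 := by
        simp only [CoxeterMatrix.A, Matrix.of_apply, Fin.ext_iff]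
        rw [if_neg (by omega), if_pos (by omega)]
      simpa [hM] using hs i j
  · rintro ⟨hsq, hfar, hbraid⟩ i j
    simp only [CoxeterMatrix.A, Matrix.of_apply]
    split_ifs with hij hadj
    · rw [hij, hsq, one_pow]
    · rw [mul_pow_three_eq_one_iff_braid (hsq i) (hsq j)]
      rcases hadj with h | h
      · exact (hbraid j i h.symm).symm
      · exact hbraid i j h.symm
    · rw [mul_pow_two_eq_one_iff_commute (hsq i) (hsq j)]
      rcases Nat.lt_or_gt_of_ne (Fin.val_ne_of_ne hij) with h | h
      · exact hfar i j (by omega)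
      · exact (hfar j i (by omega)).symm

theorem isLiftable_A_comp_succ {s : Fin (m + 1) → G} (hs : (CoxeterMatrix.A (m + 1)).IsLiftable s) :
    (CoxeterMatrix.A m).IsLiftable (s ∘ Fin.succ) := fun i j => by
  simpa [CoxeterMatrix.A] using hs i.succ j.succ

theorem commute_partialProd_of_lt {s : Fin m → G} (hs : (CoxeterMatrix.A m).IsLiftable s)
    (i : Fin m) (k : Fin (m + 1)) (hk : (k : ℕ) < i) : Commute (Fin.partialProd s k) (s i) := by
  induction k using Fin.induction with
  | zero => simp
  | succ l ih =>
    have hl : (l : ℕ) + 1 < i := by simpa using hk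
    rw [Fin.partialProd_succ]
    exact (ih (Nat.lt_of_succ_lt hl)).mul_left ((isLiftable_A_iff.1 hs).2.1 l i hl)

theorem partialProd_mul_eq_mul_partialProd {s : Fin m → G}
    (hs : (CoxeterMatrix.A m).IsLiftable s) (i j : Fin m) (hij : (j : ℕ) = i + 1)
    (k : Fin (m + 1)) (hk : (j : ℕ) < k) :
    Fin.partialProd s k * s i = s j * Fin.partialProd s k := by
  obtain ⟨-, hfar, hbraid⟩ := isLiftable_A_iff.1 hs
  induction k using Fin.induction with
  | zero => simp at hk
  | succ l ih =>
    rw [Fin.partialProd_succ]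
    rcases (Nat.lt_succ_iff.1 hk).lt_or_eq with hjl | hjl
    · rw [mul_assoc, ← hfar i l (by omega), ← mul_assoc, ih hjl, mul_assoc]
    · obtain rfl : j = l := Fin.ext hjl
      have hj : j.castSucc = i.succ := Fin.ext (by simpa using hij)
      have hcomm : Commute (Fin.partialProd s i.castSucc) (s j) :=
        commute_partialProd_of_lt hs j _ (show (i : ℕ) < j by omega)
      rw [hj, Fin.partialProd_succ]
      calc Fin.partialProd s i.castSucc * s i * s j * s i
          = Fin.partialProd s i.castSucc * (s i * s j * s i) := by group
        _ = Fin.partialProd s i.castSucc * s j * (s i * s j) := by rw [hbraid i j hij]; group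
        _ = s j * (Fin.partialProd s i.castSucc * s i * s j) := by rw [hcomm]; group

theorem partialProd_mul_mem_closure_mul_range {s : Fin (m + 1) → G}
    (hs : (CoxeterMatrix.A (m + 1)).IsLiftable s) (k : Fin (m + 2)) (i : Fin (m + 1)) :
    Fin.partialProd s k * s i ∈
      (Subgroup.closure (Set.range (s ∘ Fin.succ)) : Set G) * Set.range (Fin.partialProd s) := by
  have hmem (j : Fin (m + 1)) (hj : 0 < (j : ℕ)) :
      s j ∈ Subgroup.closure (Set.range (s ∘ Fin.succ)) := by
    obtain ⟨j, rfl⟩ := Fin.exists_succ_eq.2 (Fin.pos_iff_ne_zero.1 hj)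
    exact Subgroup.subset_closure ⟨j, rfl⟩
  have hrep (l : Fin (m + 2)) : Fin.partialProd s l ∈
      (Subgroup.closure (Set.range (s ∘ Fin.succ)) : Set G) * Set.range (Fin.partialProd s) :=
    ⟨1, one_mem _, _, ⟨l, rfl⟩, one_mul _⟩
  rcases lt_trichotomy (k : ℕ) i with hki | hki | hki
  · rw [commute_partialProd_of_lt hs i k hki]
    exact Set.mul_mem_mul (hmem i (by omega)) ⟨k, rfl⟩
  · obtain rfl : k = i.castSucc := Fin.ext hki
    rw [← Fin.partialProd_succ]
    exact hrep i.succ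
  · rcases Nat.lt_or_ge (i + 1) k with hik | hik
    · let j : Fin (m + 1) := ⟨i + 1, by omega⟩
      rw [partialProd_mul_eq_mul_partialProd hs i j rfl k hik]
      exact Set.mul_mem_mul (hmem j i.1.succ_pos) ⟨k, rfl⟩
    · obtain rfl : k = i.succ := Fin.ext (hik.antisymm hki)
      rw [Fin.partialProd_succ, mul_assoc, (isLiftable_A_iff.1 hs).1, mul_one]
      exact hrep i.castSucc

theorem closure_range_subset_mul_range_partialProd {s : Fin (m + 1) → G}
    (hs : (CoxeterMatrix.A (m + 1)).IsLiftable s) :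
    (Subgroup.closure (Set.range s) : Set G) ⊆
      (Subgroup.closure (Set.range (s ∘ Fin.succ)) : Set G) * Set.range (Fin.partialProd s) := by
  intro w hw
  set T := (Subgroup.closure (Set.range (s ∘ Fin.succ)) : Set G) * Set.range (Fin.partialProd s)
  have mul_simple_mem : ∀ x ∈ T, ∀ i, x * s i ∈ T := by
    rintro _ ⟨h, hh, _, ⟨k, rfl⟩, rfl⟩ i
    obtain ⟨h', hh', c, hc, hw⟩ := partialProd_mul_mem_closure_mul_range hs k i
    exact ⟨h * h', mul_mem hh hh', c, hc, by simp only [mul_assoc] at hw ⊢; rw [hw]⟩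
  induction hw using Subgroup.closure_induction_right with
  | one => exact ⟨1, one_mem _, 1, ⟨0, Fin.partialProd_zero s⟩, mul_one 1⟩
  | mul_right x _ _ hy ih =>
    obtain ⟨i, rfl⟩ := hy
    exact mul_simple_mem x ih i
  | mul_inv_cancel x _ _ hy ih =>
    obtain ⟨i, rfl⟩ := hy
    rw [inv_eq_of_mul_eq_one_left ((isLiftable_A_iff.1 hs).1 i)]
    exact mul_simple_mem x ih i

theorem encard_closure_range_le_factorial {s : Fin m → G}
    (hs : (CoxeterMatrix.A m).IsLiftable s) :
    (Subgroup.closure (Set.range s) : Set G).encard ≤ (m + 1).factorial := by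
  induction m with
  | zero => simp
  | succ m ih =>
    set H := Subgroup.closure (Set.range (s ∘ Fin.succ))
    have hrange : (Set.range (Fin.partialProd s)).encard ≤ (m + 2 : ℕ) := by
      rw [← Set.image_univ]
      exact Set.encard_image_le _ _ |>.trans (by simp [add_assoc, one_add_one_eq_two])
    calc (Subgroup.closure (Set.range s) : Set G).encard
        ≤ ((H : Set G) * Set.range (Fin.partialProd s)).encard :=
          Set.encard_le_encard (closure_range_subset_mul_range_partialProd hs)
      _ ≤ (H : Set G).encard * (Set.range (Fin.partialProd s)).encard := by
          rw [← Set.image_mul_prod, ← Set.encard_prod]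
          exact Set.encard_image_le _ _
      _ ≤ (m + 1).factorial * (m + 2 : ℕ) := mul_le_mul' (ih (isLiftable_A_comp_succ hs)) hrange
      _ = (m + 2).factorial := by rw [Nat.factorial_succ (m + 1), mul_comm, Nat.cast_mul]

theorem finite_and_card_le_factorial_coxeterGroup_A (m : ℕ) :
    Finite (CoxeterMatrix.A m).Group ∧
      Nat.card (CoxeterMatrix.A m).Group ≤ (m + 1).factorial := by
  let cs := (CoxeterMatrix.A m).toCoxeterSystem
  have h := encard_closure_range_le_factorial cs.simple_mul_simple_pow
  rwa [cs.subgroup_closure_range_simple, Subgroup.coe_top,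
    Set.encard_le_coe_iff_finite_ncard_le, Set.finite_univ_iff, Set.ncard_univ] at h

end TypeA

theorem range_coxeterSystem_lift {B W G : Type*} [Group W] [Group G] {M : CoxeterMatrix B}
    (cs : CoxeterSystem M W) {f : B → G} (hf : M.IsLiftable f) :
    (cs.lift ⟨f, hf⟩).range = Subgroup.closure (Set.range f) := by
  rw [MonoidHom.range_eq_map, ← cs.subgroup_closure_range_simple, MonoidHom.map_closure,
    ← Set.range_comp]
  congr 2
  exact funext fun i => cs.lift_apply_simple hf i

section Symm

variable {n : ℕ}

theorem lo_ne_hi (i : Fin (n - 1)) : lo i ≠ hi i := by simp [lo, hi]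

theorem sPerm_mul_self (i : Fin (n - 1)) : sPerm i * sPerm i = 1 := Equiv.swap_mul_self _ _

theorem commute_sPerm {i j : Fin (n - 1)} (hij : 2 ≤ Nat.dist i j) :
    Commute (sPerm i) (sPerm j) := by
  refine (Equiv.Perm.disjoint_swap_swap ?_).commute
  simp only [Nat.dist] at hij
  simp only [lo, hi, List.nodup_cons, List.mem_cons, Fin.mk.injEq, List.not_mem_nil,
    List.nodup_nil, or_false, not_false_eq_true, and_true]
  omega

theorem sPerm_braid {i j : Fin (n - 1)} (hij : (j : ℕ) = i + 1) :
    sPerm i * sPerm j * sPerm i = sPerm j * sPerm i * sPerm j := by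
  have h : hi i = lo j := Fin.ext hij.symm
  have hlo : lo i ≠ lo j := by simp [lo, hij]
  have hne : lo i ≠ hi j := Fin.ne_of_val_ne (show (i : ℕ) ≠ j + 1 by omega)
  unfold sPerm
  rw [h, Equiv.swap_mul_swap_mul_swap hlo hne, Equiv.swap_comm (lo i) (lo j),
    Equiv.swap_comm (lo j) (hi j), Equiv.swap_mul_swap_mul_swap (lo_ne_hi j).symm hne.symm,
    Equiv.swap_comm]

theorem isLiftable_sPerm : (CoxeterMatrix.A (n - 1)).IsLiftable (sPerm (n := n)) :=
  isLiftable_A_iff.2 ⟨sPerm_mul_self,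
    fun _ _ hij => commute_sPerm (by simp only [Nat.dist]; omega), fun _ _ => sPerm_braid⟩

theorem closure_range_sPerm (n : ℕ) : Subgroup.closure (Set.range (sPerm (n := n))) = ⊤ := by
  cases n with
  | zero => exact Subsingleton.elim _ _
  | succ n =>
    have h : Submonoid.closure (Set.range (sPerm (n := n + 1))) = ⊤ :=
      Equiv.Perm.mclosure_swap_castSucc_succ n
    exact top_le_iff.1 fun x _ => Subgroup.le_closure_toSubmonoid _ (h ▸ Submonoid.mem_top x)

theorem bijective_lift_sPerm (n : ℕ) :
    Function.Bijective
      ((CoxeterMatrix.A (n - 1)).toCoxeterSystem.lift ⟨sPerm (n := n), isLiftable_sPerm⟩) := by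
  obtain ⟨_, hcard⟩ := finite_and_card_le_factorial_coxeterGroup_A (n - 1)
  refine Function.Surjective.bijective_of_nat_card_le ?_ ?_
  · rw [← MonoidHom.range_eq_top, range_coxeterSystem_lift, closure_range_sPerm]
  · rw [Nat.card_perm, Nat.card_fin]
    cases n <;> exact hcard

/-- The symmetric group `S_n` as the Coxeter group of type `A_{n-1}`, with the adjacent
transpositions as simple reflections. For `n = 0` both groups are trivial. -/
noncomputable def symmCoxeterSystem (n : ℕ) :
    CoxeterSystem (CoxeterMatrix.A (n - 1)) (Equiv.Perm (Fin n)) :=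
  ⟨(MulEquiv.ofBijective _ (bijective_lift_sPerm n)).symm⟩

theorem symmCoxeterSystem_simple (i : Fin (n - 1)) : (symmCoxeterSystem n).simple i = sPerm i :=
  CoxeterSystem.lift_apply_simple _ isLiftable_sPerm i

end Symm

section FGrp

variable {n : ℕ}

theorem lift_sPerm_eq_one_of_mem_FRels {r : FreeGroup (GGen n)} (hr : r ∈ FRels n) :
    FreeGroup.lift (Sum.elim 1 sPerm : GGen n → Equiv.Perm (Fin n)) r = 1 := by
  simp only [FRels, Set.mem_union, Set.mem_iUnion, Set.mem_insert_iff,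
    Set.mem_singleton_iff] at hr
  rcases hr with (((⟨i, rfl⟩ | ⟨i, rfl⟩) | ⟨i, rfl⟩) | ⟨i, j, hij, rfl | rfl | rfl⟩) |
    ⟨i, j, hij, rfl | rfl⟩
  · simp [zg]
  · simp [tg, sPerm_mul_self]
  · simp [zg, tg]
  · simp [zg]
  · simp [zg, tg]
  · rw [map_mul, map_inv, mul_inv_eq_one]
    simpa [tg] using (commute_sPerm hij).eq
  · rw [map_mul, map_inv, mul_inv_eq_one]
    simpa [tg] using sPerm_braid hij
  · simp [zg, tg]

/-- The retraction `F_n → S_n` with `ζ_i ↦ 1` and `τ_i ↦ (i, i+1)`. -/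
def toPerm (n : ℕ) : FGrp n →* Equiv.Perm (Fin n) :=
  PresentedGroup.toGroup fun _ => lift_sPerm_eq_one_of_mem_FRels

theorem toPerm_tF (i : Fin (n - 1)) : toPerm n (tF i) = sPerm i :=
  PresentedGroup.toGroup.of _

theorem tF_mul_self (i : Fin (n - 1)) : (tF i : FGrp n) * tF i = 1 := by
  refine PresentedGroup.one_of_mem (x := tg i * tg i) ?_
  simp only [FRels, Set.mem_union, Set.mem_iUnion, Set.mem_singleton_iff]
  exact .inl (.inl (.inl (.inr ⟨i, rfl⟩)))

theorem commute_tF {i j : Fin (n - 1)} (hij : 2 ≤ Nat.dist i j) :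
    Commute (tF i : FGrp n) (tF j) := by
  refine PresentedGroup.mk_eq_mk_of_mul_inv_mem (x := tg i * tg j) (y := tg j * tg i) ?_
  simp only [FRels, Set.mem_union, Set.mem_iUnion, Set.mem_insert_iff, Set.mem_singleton_iff]
  exact .inl (.inr ⟨i, j, hij, .inr (.inr rfl)⟩)

theorem tF_braid {i j : Fin (n - 1)} (hij : (j : ℕ) = i + 1) :
    (tF i : FGrp n) * tF j * tF i = tF j * tF i * tF j := by
  refine PresentedGroup.mk_eq_mk_of_mul_inv_mem (x := tg i * tg j * tg i)
    (y := tg j * tg i * tg j) ?_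
  simp only [FRels, Set.mem_union, Set.mem_iUnion, Set.mem_insert_iff, Set.mem_singleton_iff]
  exact .inr ⟨i, j, hij, .inl rfl⟩

theorem isLiftable_tF : (CoxeterMatrix.A (n - 1)).IsLiftable (tF : Fin (n - 1) → FGrp n) :=
  isLiftable_A_iff.2 ⟨tF_mul_self,
    fun _ _ hij => commute_tF (by simp only [Nat.dist]; omega), fun _ _ => tF_braid⟩

/-- The homomorphism `S_n → F_n` with `(i, i+1) ↦ τ_i`, a section of `toPerm`. -/
noncomputable def ofPerm (n : ℕ) : Equiv.Perm (Fin n) →* FGrp n :=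
  (symmCoxeterSystem n).lift ⟨tF, isLiftable_tF⟩

theorem ofPerm_sPerm (i : Fin (n - 1)) : ofPerm n (sPerm i) = tF i := by
  rw [← symmCoxeterSystem_simple]
  exact CoxeterSystem.lift_apply_simple _ isLiftable_tF i

theorem leftInverse_toPerm_ofPerm (n : ℕ) : Function.LeftInverse (toPerm n) (ofPerm n) := by
  suffices h : (toPerm n).comp (ofPerm n) = MonoidHom.id _ from DFunLike.congr_fun h
  refine (symmCoxeterSystem n).ext_simple fun i => ?_
  simp [symmCoxeterSystem_simple, ofPerm_sPerm, toPerm_tF]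

theorem range_ofPerm (n : ℕ) : (ofPerm n).range = Subgroup.closure (Set.range tF) :=
  range_coxeterSystem_lift _ isLiftable_tF

end FGrp

/-- the subgroup of `F_n` generated by the virtual generators
`τ_1, …, τ_{n-1}` is isomorphic to the symmetric group `S_n`, via `τ_i ↦ (i, i+1)`. -/
theorem tau_subgroup_iso_symm (n : ℕ) :
    ∃ e : ↥(Subgroup.closure (Set.range fun i : Fin (n-1) => (tF i : FGrp n)))
        ≃* Equiv.Perm (Fin n),
      ∀ i : Fin (n-1),
        e ⟨tF i, Subgroup.subset_closure ⟨i, rfl⟩⟩ = sPerm i := by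
  let e := (MulEquiv.subgroupCongr (range_ofPerm n).symm).trans
    (MonoidHom.ofLeftInverse (leftInverse_toPerm_ofPerm n)).symm
  exact ⟨e, toPerm_tF⟩

end OneTermBracket
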